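/- Let p be a prime with p ≡ 3 (mod 4) and q = p^m with m an even positive integer. Then the following four identities hold: (1) (n_{1,1}+n_{−1,1}) + (n_{1,3}+n_{−1,3}) + n_{1,0} + n_{−1,0} + n_{1,2} + n_{−1,2} + n_{1,4} + n_{−1,4} = p^{3m} − 1; (2) n_{1,0} − n_{−1,0} + p(n_{1,2} − n_{−1,2}) + p²(n_{1,4} − n_{−1,4}) = p^{m/2}(p^{2m} − 1); (3) −p(n_{1,1}+n_{−1,1}) − p³(n_{1,3}+n_{−1,3}) + n_{1,0} + n_{−1,0} + p²(n_{1,2}+n_{−1,2}) + p⁴(n_{1,4}+n_{−1,4}) = p^m(p^m − 1); (4) n_{1,0} − n_{−1,0} + p³(n_{1,2} − n_{−1,2}) + p⁶(n_{1,4} − n_{−1,4}) = (p+1)·p^{3m/2}·(p^m − 1). -/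

import Mathlib

open Complex Finset

noncomputable def zetaPow (p : ℕ) (a : ZMod p) : ℂ :=
  Complex.exp (2 * Real.pi * Complex.I * (a.val : ℂ) / (p : ℂ))

noncomputable def expSum (p m : ℕ) [Fact p.Prime]
    (α β γ : GaloisField p m) : ℂ :=
  letI : Fintype (GaloisField p m) := Fintype.ofFinite _
  ∑ x : GaloisField p m,
    zetaPow p ((Algebra.trace (ZMod p) (GaloisField p m))
      (α * x ^ 2 + β * x ^ (p + 1) + γ * x ^ (p ^ 2 + 1)))

noncomputable def nval (p m : ℕ) (ε : ℤ) (j : ℕ) : ℂ :=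
  if j % 2 = 0 then (ε : ℂ) * ((Real.sqrt ((p : ℝ) ^ (m + j)) : ℝ) : ℂ)
  else (ε : ℂ) * Complex.I * ((Real.sqrt ((p : ℝ) ^ (m + j)) : ℝ) : ℂ)

noncomputable def nn (p m : ℕ) [Fact p.Prime] (ε : ℤ) (j : ℕ) : ℕ :=
  {t : GaloisField p m × GaloisField p m × GaloisField p m |
    t ≠ (0, 0, 0) ∧ expSum p m t.1 t.2.1 t.2.2 = nval p m ε j}.ncard

/-- The trace pullback to `F` of the standard additive character of `ZMod p`. -/
noncomputable def traceChar (p : ℕ) [Fact p.Prime] (F : Type*) [Field F] [Algebra (ZMod p) F] :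
    AddChar F ℂ :=
  (ZMod.stdAddChar (N := p)).compAddMonoidHom (Algebra.trace (ZMod p) F).toAddMonoidHom

lemma traceChar_apply (p : ℕ) [Fact p.Prime] {F : Type*} [Field F] [Algebra (ZMod p) F] (x : F) :
    traceChar p F x = ZMod.stdAddChar (Algebra.trace (ZMod p) F x) := rfl

lemma zetaPow_eq_stdAddChar (p : ℕ) [Fact p.Prime] (a : ZMod p) :
    zetaPow p a = ZMod.stdAddChar a := by
  rw [ZMod.stdAddChar_apply, ZMod.toCircle_apply, zetaPow]

lemma traceChar_isPrimitive (p : ℕ) [Fact p.Prime] {F : Type*} [Field F] [Finite F]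
    [Algebra (ZMod p) F] : (traceChar p F).IsPrimitive := by
  apply AddChar.IsPrimitive.of_ne_one
  obtain ⟨x, hx⟩ := Algebra.trace_surjective (ZMod p) F 1
  intro h
  have h1 : traceChar p F x = 1 := by rw [h]; rfl
  rw [traceChar_apply, hx] at h1
  have := ZMod.injective_stdAddChar (N := p) (h1.trans (AddChar.map_zero_eq_one _).symm)
  exact one_ne_zero this

lemma traceChar_sum (p : ℕ) [Fact p.Prime] {F ι : Type*} [Field F] [Algebra (ZMod p) F]
    (s : Finset ι) (f : ι → F) :
    traceChar p F (∑ i ∈ s, f i) = ∏ i ∈ s, traceChar p F (f i) :=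
  map_prod (traceChar p F).toMonoidHom (fun i => Multiplicative.ofAdd (f i)) s

/-- The square of a one-variable quadratic Gauss sum over a prime field, `p ≡ 3 [MOD 4]`. -/
lemma quadratic_sum_sq {p : ℕ} [Fact p.Prime] (hp4 : p % 4 = 3) {w : ZMod p} (hw : w ≠ 0) :
    (∑ x : ZMod p, (ZMod.stdAddChar (w * x ^ 2) : ℂ)) ^ 2 = -p := by
  have hchar : ringChar (ZMod p) ≠ 2 := by rw [ZMod.ringChar_zmod_n]; omega
  set ψ : AddChar (ZMod p) ℂ := AddChar.mulShift ZMod.stdAddChar w with hψdef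
  have hψ1 : ψ ≠ 1 := ZMod.isPrimitive_stdAddChar p hw
  have hψ : ψ.IsPrimitive := AddChar.IsPrimitive.of_ne_one hψ1
  set χ : MulChar (ZMod p) ℂ := (quadraticChar (ZMod p)).ringHomComp (Int.castRingHom ℂ) with hχdef
  have hχ2 : χ.IsQuadratic := (quadraticChar_isQuadratic (ZMod p)).comp _
  have hχ1 : χ ≠ 1 :=
    (MulChar.ringHomComp_ne_one_iff (RingHom.injective_int _)).mpr (quadraticChar_ne_one hchar)
  have hm1 : χ (-1) = -1 := by
    have : quadraticChar (ZMod p) (-1) = -1 := by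
      rw [quadraticChar_neg_one hchar, ZMod.card, ZMod.χ₄_nat_three_mod_four hp4]
    simp [hχdef, MulChar.ringHomComp_apply, this]
  have key : ∑ x : ZMod p, (ZMod.stdAddChar (w * x ^ 2) : ℂ) = gaussSum χ ψ := by
    have h1 : ∑ x : ZMod p, (ZMod.stdAddChar (w * x ^ 2) : ℂ)
        = ∑ y : ZMod p, ∑ x : ZMod p with x ^ 2 = y, ψ y := by
      rw [← Finset.sum_fiberwise_of_maps_to (g := fun x : ZMod p => x ^ 2) (t := Finset.univ)
        (fun _ _ => Finset.mem_univ _)]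
      refine Finset.sum_congr rfl fun y _ => Finset.sum_congr rfl fun x hx => ?_
      rw [Finset.mem_filter] at hx
      rw [hψdef, AddChar.mulShift_apply, hx.2]
    have h2 : ∀ y : ZMod p, ∑ x : ZMod p with x ^ 2 = y, ψ y = χ y * ψ y + ψ y := by
      intro y
      have h3 := quadraticChar_card_sqrts hchar y
      rw [Finset.sum_const, nsmul_eq_mul]
      have h4 : ((#{x : ZMod p | x ^ 2 = y} : ℕ) : ℤ) = quadraticChar (ZMod p) y + 1 := by
        rw [← h3]; congr 2; ext; simp
      have h5 : ((#{x : ZMod p | x ^ 2 = y} : ℕ) : ℂ) = χ y + 1 := by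
        rw [hχdef, MulChar.ringHomComp_apply]
        simpa using congrArg (Int.cast : ℤ → ℂ) h4
      rw [h5]; ring
    rw [h1, Finset.sum_congr rfl fun y _ => h2 y, Finset.sum_add_distrib,
      AddChar.sum_eq_zero_of_ne_one hψ1, add_zero, gaussSum]
  rw [key, gaussSum_sq hχ1 hχ2 hψ, hm1, ZMod.card]; ring

/-- The affine conic `a ^ 2 + b ^ 2 + 1 = 0` has `p + 1` points over `ZMod p`,
`p ≡ 3 [MOD 4]`. -/
lemma card_conic {p : ℕ} [Fact p.Prime] (hp4 : p % 4 = 3) :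
    #{t : ZMod p × ZMod p | t.1 ^ 2 + t.2 ^ 2 + 1 = 0} = p + 1 := by
  have hp0 : (p : ℂ) ≠ 0 := Nat.cast_ne_zero.mpr (Fact.out : p.Prime).ne_zero
  have hprim := ZMod.isPrimitive_stdAddChar p
  have h1 : ∑ c : ZMod p, ∑ t : ZMod p × ZMod p,
      (ZMod.stdAddChar (c * (t.1 ^ 2 + t.2 ^ 2 + 1)) : ℂ)
      = #{t : ZMod p × ZMod p | t.1 ^ 2 + t.2 ^ 2 + 1 = 0} * p := by
    rw [Finset.sum_comm]
    simp_rw [AddChar.sum_mulShift _ hprim, ZMod.card]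
    push_cast
    rw [← Finset.sum_filter, Finset.sum_const, nsmul_eq_mul]
  have h2 : ∀ c : ZMod p, ∑ t : ZMod p × ZMod p,
      (ZMod.stdAddChar (c * (t.1 ^ 2 + t.2 ^ 2 + 1)) : ℂ)
      = (∑ x : ZMod p, (ZMod.stdAddChar (c * x ^ 2) : ℂ)) ^ 2 * ZMod.stdAddChar c := by
    intro c
    rw [sq, Finset.sum_mul_sum, Fintype.sum_prod_type, Finset.sum_mul]
    refine Finset.sum_congr rfl fun x _ => ?_
    rw [Finset.sum_mul]
    refine Finset.sum_congr rfl fun y _ => ?_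
    rw [← AddChar.map_add_eq_mul, ← AddChar.map_add_eq_mul]
    congr 1; ring
  have h3 : ∑ c : ZMod p, (ZMod.stdAddChar c : ℂ) = 0 := by
    simpa using AddChar.sum_mulShift (1 : ZMod p) hprim
  have h4 : ∑ c : ZMod p, (∑ x : ZMod p, (ZMod.stdAddChar (c * x ^ 2) : ℂ)) ^ 2 *
      ZMod.stdAddChar c = p ^ 2 + p := by
    rw [← Finset.add_sum_erase _ _ (Finset.mem_univ 0)] at h3 ⊢
    have h5 : ∀ c ∈ Finset.univ.erase (0 : ZMod p),
        (∑ x : ZMod p, (ZMod.stdAddChar (c * x ^ 2) : ℂ)) ^ 2 * ZMod.stdAddChar c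
          = -(p : ℂ) * ZMod.stdAddChar c := fun c hc => by
      rw [quadratic_sum_sq hp4 (Finset.ne_of_mem_erase hc)]
    rw [Finset.sum_congr rfl h5, ← Finset.mul_sum, eq_neg_of_add_eq_zero_right h3]
    simp [ZMod.card]
  rw [Finset.sum_congr rfl fun c _ => h2 c, h4] at h1
  have h5 : ((#{t : ZMod p × ZMod p | t.1 ^ 2 + t.2 ^ 2 + 1 = 0} : ℕ) : ℂ) = ((p + 1 : ℕ) : ℂ) := by
    apply mul_right_cancel₀ hp0
    rw [← h1]; push_cast; ring
  exact_mod_cast h5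

section FiniteField

variable {p : ℕ} [Fact p.Prime] {F : Type*} [Field F] [Algebra (ZMod p) F]

lemma two_ne_zero_of_mod_four (hp4 : p % 4 = 3) : (2 : F) ≠ 0 := by
  have : CharP F p := charP_of_injective_algebraMap (algebraMap (ZMod p) F).injective p
  intro h
  have h2 : ((2 : ℕ) : F) = 0 := by exact_mod_cast h
  rw [CharP.cast_eq_zero_iff F p] at h2
  have := Nat.le_of_dvd (by norm_num) h2
  omega

lemma eq_zero_of_sq_add_sq (hp4 : p % 4 = 3) {x y : F} (h1 : x ^ 2 + y ^ 2 = 0)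
    (h2 : x ^ (p + 1) + y ^ (p + 1) = 0) : x = 0 ∧ y = 0 := by
  obtain ⟨k, hk⟩ : ∃ k, p + 1 = 2 * (2 * k) := ⟨(p + 1) / 4, by omega⟩
  have hx : x ^ 2 = -y ^ 2 := by linear_combination h1
  have h3 : x ^ (p + 1) = y ^ (p + 1) := by
    rw [hk, pow_mul, hx, (even_two_mul k).neg_pow, ← pow_mul]
  rw [h3, ← two_mul] at h2
  have hy : y = 0 := eq_zero_of_pow_eq_zero
    ((mul_eq_zero.mp h2).resolve_left (two_ne_zero_of_mod_four (p := p) hp4))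
  refine ⟨?_, hy⟩
  rw [hy] at hx
  simpa using hx

/-- A vector isotropic for the sum of three squares and orthogonal to its Frobenius conjugate
is rational up to scaling. -/
lemma pow_eq_self_of_conic {a b : F} (h1 : a ^ 2 + b ^ 2 + 1 = 0)
    (h2 : a ^ (p + 1) + b ^ (p + 1) + 1 = 0) : a ^ p = a ∧ b ^ p = b := by
  have : CharP F p := charP_of_injective_algebraMap (algebraMap (ZMod p) F).injective p
  have h3 : (a ^ p) ^ 2 + (b ^ p) ^ 2 + 1 = 0 := by
    have := congrArg (· ^ p) h1
    simpa [add_pow_char, ← pow_mul, mul_comm, (Fact.out : p.Prime).ne_zero] using this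
  rw [pow_succ, pow_succ] at h2
  have h4 : a * b ^ p - b * a ^ p = 0 := by
    apply eq_zero_of_pow_eq_zero (n := 2)
    linear_combination ((a ^ p) ^ 2 + (b ^ p) ^ 2) * h1 - h3 -
      (a ^ p * a + b ^ p * b - 1) * h2
  constructor
  · linear_combination a ^ p * h1 - a * h2 + b * h4
  · linear_combination b ^ p * h1 - b * h2 - a * h4

lemma exists_algebraMap_eq_of_pow_eq {a : F} (h : a ^ p = a) :
    ∃ c : ZMod p, algebraMap (ZMod p) F c = a := by
  have : CharP F p := charP_of_injective_algebraMap (algebraMap (ZMod p) F).injective p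
  have h1 : a ∈ (⊥ : Subfield F) := (Subfield.mem_bot_iff_pow_eq_self F p).mpr h
  exact (bot_le : (⊥ : Subfield F) ≤ (algebraMap (ZMod p) F).fieldRange) h1

/-- The exponential sum attached to `α x ^ 2 + β x ^ (p + 1) + γ x ^ (p ^ 2 + 1)`. -/
noncomputable def quadSum (p : ℕ) [Fact p.Prime] {F : Type*} [Field F] [Fintype F]
    [Algebra (ZMod p) F] (t : F × F × F) : ℂ :=
  ∑ x : F, traceChar p F (t.1 * x ^ 2 + t.2.1 * x ^ (p + 1) + t.2.2 * x ^ (p ^ 2 + 1))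

/-- The simultaneous zeros in `F ^ k` of the three diagonal forms. -/
def IsDiagZero (p : ℕ) {F : Type*} [Field F] {k : ℕ} (v : Fin k → F) : Prop :=
  ∑ i, v i ^ 2 = 0 ∧ ∑ i, v i ^ (p + 1) = 0 ∧ ∑ i, v i ^ (p ^ 2 + 1) = 0

open Classical in
lemma card_isDiagZero_one (p : ℕ) {F : Type*} [Field F] [Fintype F] :
    #{v : Fin 1 → F | IsDiagZero p v} = 1 := by
  rw [Finset.card_eq_one]
  refine ⟨0, ?_⟩
  ext v
  simp only [IsDiagZero, Finset.mem_filter, Finset.mem_univ, true_and, Finset.mem_singleton,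
    Fin.sum_univ_one]
  constructor
  · rintro ⟨h, -⟩
    ext i
    rw [Subsingleton.elim i 0]
    simpa using h
  · rintro rfl; simp

variable [Fintype F]

open Classical in
lemma sum_quadSum_pow (k : ℕ) :
    ∑ t : F × F × F, quadSum p t ^ k
      = (Fintype.card F : ℂ) ^ 3 * #{v : Fin k → F | IsDiagZero p v} := by
  have hprim := traceChar_isPrimitive p (F := F)
  have h1 : ∀ t : F × F × F, quadSum p t ^ k = ∑ v : Fin k → F,
      traceChar p F (t.1 * ∑ i, v i ^ 2) * (traceChar p F (t.2.1 * ∑ i, v i ^ (p + 1)) *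
        traceChar p F (t.2.2 * ∑ i, v i ^ (p ^ 2 + 1))) := by
    intro t
    rw [quadSum, Fintype.sum_pow]
    refine Finset.sum_congr rfl fun v _ => ?_
    rw [← AddChar.map_add_eq_mul, ← AddChar.map_add_eq_mul, ← traceChar_sum]
    congr 1
    rw [Finset.mul_sum, Finset.mul_sum, Finset.mul_sum, ← Finset.sum_add_distrib,
      ← Finset.sum_add_distrib]
    exact Finset.sum_congr rfl fun i _ => by ring
  rw [Finset.sum_congr rfl fun t _ => h1 t, Finset.sum_comm]
  simp_rw [Fintype.sum_prod_type, ← Finset.mul_sum, ← Finset.sum_mul,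
    AddChar.sum_mulShift _ hprim]
  rw [Finset.card_filter, Nat.cast_sum, Finset.mul_sum]
  refine Finset.sum_congr rfl fun v _ => ?_
  unfold IsDiagZero
  by_cases ha : ∑ i, v i ^ 2 = 0 <;> by_cases hb : ∑ i, v i ^ (p + 1) = 0 <;>
    by_cases hc : ∑ i, v i ^ (p ^ 2 + 1) = 0 <;> (simp [ha, hb, hc]; try ring)

open Classical in
lemma card_isDiagZero_two (hp4 : p % 4 = 3) : #{v : Fin 2 → F | IsDiagZero p v} = 1 := by
  rw [Finset.card_eq_one]
  refine ⟨0, ?_⟩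
  ext v
  simp only [IsDiagZero, Finset.mem_filter, Finset.mem_univ, true_and, Finset.mem_singleton,
    Fin.sum_univ_two]
  constructor
  · rintro ⟨h1, h2, -⟩
    obtain ⟨h, h'⟩ := eq_zero_of_sq_add_sq hp4 h1 h2
    ext i
    fin_cases i
    · exact h
    · exact h'
  · rintro rfl; simp

open Classical in
lemma card_isDiagZero_three (hp4 : p % 4 = 3) :
    (#{v : Fin 3 → F | IsDiagZero p v} : ℤ) = 1 + (p + 1) * ((Fintype.card F : ℤ) - 1) := by
  set A : Finset (ZMod p × ZMod p) := {t | t.1 ^ 2 + t.2 ^ 2 + 1 = 0} with hA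
  set f : (ZMod p × ZMod p) × F → (Fin 3 → F) := fun s =>
    ![s.2 * algebraMap (ZMod p) F s.1.1, s.2 * algebraMap (ZMod p) F s.1.2, s.2] with hf
  have hinj : Set.InjOn f (A ×ˢ (Finset.univ.erase (0 : F)) : Finset _) := by
    rintro ⟨⟨a, b⟩, z⟩ hs ⟨⟨a', b'⟩, z'⟩ hs' h
    have hz : z ≠ 0 := by
      have := (Finset.mem_product.mp (Finset.mem_coe.mp hs)).2
      exact Finset.ne_of_mem_erase this
    have e0 := congrFun h 0
    have e1 := congrFun h 1
    have e2 := congrFun h 2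
    simp only [hf, Matrix.cons_val_zero, Matrix.cons_val_one, Matrix.cons_val] at e0 e1 e2
    subst e2
    have i0 := (algebraMap (ZMod p) F).injective (mul_left_cancel₀ hz e0)
    have i1 := (algebraMap (ZMod p) F).injective (mul_left_cancel₀ hz e1)
    rw [i0, i1]
  have heq : ({v : Fin 3 → F | IsDiagZero p v} : Finset _).erase 0
      = (A ×ˢ (Finset.univ.erase (0 : F))).image f := by
    ext v
    simp only [Finset.mem_erase, Finset.mem_filter, Finset.mem_univ, true_and, and_true,
      Finset.mem_image, Finset.mem_product, IsDiagZero, Fin.sum_univ_three, hA]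
    constructor
    · rintro ⟨hv, h1, h2, -⟩
      have hz : v 2 ≠ 0 := by
        intro hz
        rw [hz] at h1 h2
        simp only [ne_eq, OfNat.ofNat_ne_zero, not_false_eq_true, zero_pow, add_zero,
          Nat.add_eq_zero_iff, one_ne_zero, and_false] at h1 h2
        obtain ⟨h, h'⟩ := eq_zero_of_sq_add_sq hp4 h1 h2
        apply hv
        ext i
        fin_cases i
        · exact h
        · exact h'
        · exact hz
      have h1' : (v 0 / v 2) ^ 2 + (v 1 / v 2) ^ 2 + 1 = 0 := by
        field_simp; simpa using h1
      have h2' : (v 0 / v 2) ^ (p + 1) + (v 1 / v 2) ^ (p + 1) + 1 = 0 := by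
        rw [div_pow, div_pow]; field_simp; simpa using h2
      obtain ⟨ha, hb⟩ := pow_eq_self_of_conic h1' h2'
      obtain ⟨a, ha⟩ := exists_algebraMap_eq_of_pow_eq ha
      obtain ⟨b, hb⟩ := exists_algebraMap_eq_of_pow_eq hb
      refine ⟨((a, b), v 2), ⟨?_, hz⟩, ?_⟩
      · apply (algebraMap (ZMod p) F).injective
        simpa [ha, hb] using h1'
      · ext i
        fin_cases i
        · simp [hf, ha, mul_div_cancel₀ _ hz]
        · simp [hf, hb, mul_div_cancel₀ _ hz]
        · simp [hf]
    · rintro ⟨⟨⟨a, b⟩, z⟩, ⟨h, hz⟩, rfl⟩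
      have h' := congrArg (algebraMap (ZMod p) F) h
      simp only [map_add, map_pow, map_one, map_zero] at h'
      have fa : ∀ c : ZMod p, (algebraMap (ZMod p) F c) ^ p = algebraMap (ZMod p) F c := fun c => by
        rw [← map_pow, ZMod.pow_card]
      refine ⟨fun h0 => hz (by simpa [hf] using congrFun h0 2), ?_, ?_, ?_⟩
      · simp [hf]
        linear_combination z ^ 2 * h'
      · simp only [hf, Matrix.cons_val_zero, Matrix.cons_val_one, Matrix.cons_val, mul_pow]
        rw [pow_succ (algebraMap (ZMod p) F a), pow_succ (algebraMap (ZMod p) F b), fa, fa]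
        linear_combination z ^ (p + 1) * h'
      · simp only [hf, Matrix.cons_val_zero, Matrix.cons_val_one, Matrix.cons_val, mul_pow]
        rw [pow_succ (algebraMap (ZMod p) F a), pow_succ (algebraMap (ZMod p) F b), sq p,
          pow_mul (algebraMap (ZMod p) F a), pow_mul (algebraMap (ZMod p) F b), fa, fa, fa, fa]
        linear_combination z ^ (p * p + 1) * h'
  have h0 : (0 : Fin 3 → F) ∈ ({v : Fin 3 → F | IsDiagZero p v} : Finset _) := by
    rw [Finset.mem_filter]
    simp [IsDiagZero]
  have hcard := Finset.card_erase_add_one h0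
  rw [heq, Finset.card_image_of_injOn hinj, Finset.card_product, card_conic hp4,
    Finset.card_erase_of_mem (Finset.mem_univ _), Finset.card_univ] at hcard
  rw [← hcard]
  push_cast [Nat.cast_sub (Fintype.card_pos (α := F))]
  ring

end FiniteField

section Radical

variable {p : ℕ} [Fact p.Prime] {F : Type*} [Field F] [Algebra (ZMod p) F]

/-- The linear map `x ↦ α x + β x ^ p + γ x ^ (p ^ 2)`. -/
noncomputable def linearizedMap (p : ℕ) [Fact p.Prime] {F : Type*} [Field F]
    [Algebra (ZMod p) F] (t : F × F × F) : F →ₗ[ZMod p] F :=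
  LinearMap.mulLeft (ZMod p) t.1
    + LinearMap.mulLeft (ZMod p) t.2.1 ∘ₗ (FiniteField.frobeniusAlgHom (ZMod p) F).toLinearMap
    + LinearMap.mulLeft (ZMod p) t.2.2 ∘ₗ (FiniteField.frobeniusAlgHom (ZMod p) F).toLinearMap
      ∘ₗ (FiniteField.frobeniusAlgHom (ZMod p) F).toLinearMap

lemma linearizedMap_apply (t : F × F × F) (x : F) :
    linearizedMap p t x = t.1 * x + t.2.1 * x ^ p + t.2.2 * x ^ (p ^ 2) := by
  simp [linearizedMap, FiniteField.frobeniusAlgHom_apply, ZMod.card, ← pow_mul, sq]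

/-- The quadratic form `x ↦ Tr (α x ^ 2 + β x ^ (p + 1) + γ x ^ (p ^ 2 + 1))`. -/
noncomputable def traceQuadForm (p : ℕ) [Fact p.Prime] {F : Type*} [Field F]
    [Algebra (ZMod p) F] (t : F × F × F) : QuadraticForm (ZMod p) F :=
  LinearMap.BilinMap.toQuadraticMap ((Algebra.traceForm (ZMod p) F) ∘ₗ linearizedMap p t)

lemma traceQuadForm_apply (t : F × F × F) (x : F) :
    traceQuadForm p t x = Algebra.trace (ZMod p) F
      (t.1 * x ^ 2 + t.2.1 * x ^ (p + 1) + t.2.2 * x ^ (p ^ 2 + 1)) := by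
  rw [traceQuadForm, LinearMap.BilinMap.toQuadraticMap_apply, LinearMap.comp_apply,
    Algebra.traceForm_apply, linearizedMap_apply]
  congr 1; ring

lemma polar_traceQuadForm (t : F × F × F) (x y : F) :
    QuadraticMap.polar (traceQuadForm p t) x y = Algebra.trace (ZMod p) F
      (linearizedMap p t x * y) + Algebra.trace (ZMod p) F (linearizedMap p t y * x) := by
  rw [traceQuadForm, LinearMap.BilinMap.polar_toQuadraticMap, LinearMap.comp_apply,
    LinearMap.comp_apply, Algebra.traceForm_apply, Algebra.traceForm_apply]

open Polynomial in
/-- The linearized polynomial whose roots contain the radical of `traceQuadForm p t`. -/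
noncomputable def radicalPoly (p : ℕ) {F : Type*} [Field F] (t : F × F × F) : F[X] :=
  C (t.2.2 ^ (p ^ 2)) * X ^ (p ^ 4) + C (t.2.1 ^ (p ^ 2)) * X ^ (p ^ 3)
    + C (2 * t.1 ^ (p ^ 2)) * X ^ (p ^ 2) + C (t.2.1 ^ p) * X ^ p + C t.2.2 * X

lemma radicalPoly_natDegree_le {p : ℕ} {F : Type*} [Field F] (hp : 1 < p) (t : F × F × F) :
    (radicalPoly p t).natDegree ≤ p ^ 4 := by
  have h1 : p ≤ p ^ 4 := Nat.le_self_pow (by norm_num) p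
  have h2 : p ^ 2 ≤ p ^ 4 := Nat.pow_le_pow_right hp.le (by norm_num)
  have h3 : p ^ 3 ≤ p ^ 4 := Nat.pow_le_pow_right hp.le (by norm_num)
  have h4 : 1 ≤ p ^ 4 := hp.le.trans h1
  unfold radicalPoly
  compute_degree
  simp [h1, h2, h3, h4]

lemma radicalPoly_ne_zero (hp4 : p % 4 = 3) {t : F × F × F} (ht : t ≠ 0) :
    radicalPoly p t ≠ 0 := by
  have hp : 1 < p := (Fact.out : p.Prime).one_lt
  have d1 : p ≠ 1 := hp.ne'
  have hpow : ∀ a b : ℕ, p ^ a = p ^ b ↔ a = b := fun a b => Nat.pow_right_inj hp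
  have e1' : ∀ a, 1 = p ^ a ↔ a = 0 := fun a => by
    rw [eq_comm]; simpa using hpow a 0
  have ep : ∀ a, p ^ a = p ↔ a = 1 := fun a => by simpa using hpow a 1
  have ep' : ∀ a, p = p ^ a ↔ a = 1 := fun a => by rw [eq_comm, ep]
  intro h
  have c1 := congrArg (fun P => Polynomial.coeff P 1) h
  have c2 := congrArg (fun P => Polynomial.coeff P p) h
  have c3 := congrArg (fun P => Polynomial.coeff P (p ^ 2)) h
  simp only [radicalPoly, Polynomial.coeff_add, Polynomial.coeff_C_mul, Polynomial.coeff_X_pow,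
    Polynomial.coeff_X, Polynomial.coeff_zero, hpow, e1', ep, ep'] at c1 c2 c3
  have h2 : (2 : F) ≠ 0 := two_ne_zero_of_mod_four (p := p) hp4
  simp [d1.symm, h2] at c1 c2 c3
  apply ht
  ext
  · exact c3.1
  · exact c2.1
  · exact c1

variable [Finite F]

lemma trace_pow_prime (x : F) :
    Algebra.trace (ZMod p) F (x ^ p) = Algebra.trace (ZMod p) F x := by
  have h := Algebra.trace_eq_of_algEquiv (FiniteField.frobeniusAlgEquivOfAlgebraic (ZMod p) F) x
  rwa [FiniteField.coe_frobeniusAlgEquivOfAlgebraic, ZMod.card] at h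

lemma radicalPoly_isRoot {t : F × F × F} {x : F}
    (hx : ∀ y, QuadraticMap.polar (traceQuadForm p t) x y = 0) :
    (radicalPoly p t).IsRoot x := by
  have : CharP F p := charP_of_injective_algebraMap (algebraMap (ZMod p) F).injective p
  have tr2 : ∀ u : F, Algebra.trace (ZMod p) F u = Algebra.trace (ZMod p) F (u ^ (p ^ 2)) := by
    intro u; rw [sq, pow_mul, trace_pow_prime, trace_pow_prime]
  have key : ∀ y, Algebra.trace (ZMod p) F ((radicalPoly p t).eval x * y ^ (p ^ 2)) = 0 := by
    intro y
    have h := hx y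
    rw [polar_traceQuadForm, linearizedMap_apply, linearizedMap_apply] at h
    have e1 : Algebra.trace (ZMod p) F ((t.1 * x + t.2.1 * x ^ p + t.2.2 * x ^ (p ^ 2)) * y) =
        Algebra.trace (ZMod p) F (t.1 ^ (p ^ 2) * x ^ (p ^ 2) * y ^ (p ^ 2)
          + t.2.1 ^ (p ^ 2) * x ^ (p ^ 3) * y ^ (p ^ 2)
          + t.2.2 ^ (p ^ 2) * x ^ (p ^ 4) * y ^ (p ^ 2)) := by
      rw [tr2, mul_pow, add_pow_char_pow, add_pow_char_pow, mul_pow, mul_pow, mul_pow,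
        ← pow_mul, ← pow_mul]
      congr 1; ring
    have e2 : Algebra.trace (ZMod p) F ((t.1 * y + t.2.1 * y ^ p + t.2.2 * y ^ (p ^ 2)) * x) =
        Algebra.trace (ZMod p) F (t.1 ^ (p ^ 2) * x ^ (p ^ 2) * y ^ (p ^ 2)
          + t.2.1 ^ p * x ^ p * y ^ (p ^ 2) + t.2.2 * x * y ^ (p ^ 2)) := by
      rw [add_mul, add_mul, map_add, map_add, tr2 (t.1 * y * x),
        ← trace_pow_prime (t.2.1 * y ^ p * x), ← map_add, ← map_add]
      simp only [mul_pow, ← pow_mul]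
      congr 1; ring
    rw [e1, e2, ← map_add] at h
    rw [← h]
    simp only [radicalPoly, Polynomial.eval_add, Polynomial.eval_mul, Polynomial.eval_C,
      Polynomial.eval_pow, Polynomial.eval_X]
    congr 1; ring
  have hsurj : ∀ z : F, ∃ y : F, y ^ (p ^ 2) = z := fun z => by
    obtain ⟨y, hy⟩ := (bijective_iterateFrobenius (R := F) (p := p) (n := 2)).surjective z
    exact ⟨y, by rwa [iterateFrobenius_def] at hy⟩
  rw [Polynomial.IsRoot.def]
  apply (traceForm_nondegenerate (ZMod p) F).1
  intro z
  obtain ⟨y, rfl⟩ := hsurj z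
  exact key y

end Radical

lemma prod_eq_pow_or_neg_pow {ι : Type*} (s : Finset ι) (f : ι → ℂ) (c : ℂ)
    (h : ∀ i ∈ s, f i = c ∨ f i = -c) : ∏ i ∈ s, f i = c ^ #s ∨ ∏ i ∈ s, f i = -c ^ #s := by
  classical
  induction s using Finset.induction_on with
  | empty => simp
  | insert a s ha ih =>
    rw [Finset.prod_insert ha, Finset.card_insert_of_notMem ha, pow_succ']
    rcases h a (Finset.mem_insert_self a s) with h1 | h1 <;>
      rcases ih (fun i hi => h i (Finset.mem_insert_of_mem hi)) with h2 | h2 <;>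
      simp [h1, h2]

lemma quadratic_sum_eq {p : ℕ} [Fact p.Prime] (hp4 : p % 4 = 3) {w : ZMod p} (hw : w ≠ 0) :
    ∑ x : ZMod p, (ZMod.stdAddChar (w * x ^ 2) : ℂ) = I * (Real.sqrt p : ℝ) ∨
      ∑ x : ZMod p, (ZMod.stdAddChar (w * x ^ 2) : ℂ) = -(I * (Real.sqrt p : ℝ)) := by
  apply sq_eq_sq_iff_eq_or_eq_neg.mp
  rw [quadratic_sum_sq hp4 hw, mul_pow, I_sq, ← ofReal_pow, Real.sq_sqrt (Nat.cast_nonneg p)]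
  simp

/-- The exponential sum of a nonzero triple is `± p ^ k (i √p) ^ n` with `k ≤ 4` the dimension of
the radical and `n` the rank. -/
lemma quadSum_eq {p : ℕ} [Fact p.Prime] (hp4 : p % 4 = 3) {F : Type*} [Field F] [Fintype F]
    [Algebra (ZMod p) F] {t : F × F × F} (ht : t ≠ 0) :
    ∃ k n : ℕ, k ≤ 4 ∧ k + n = Module.finrank (ZMod p) F ∧
      (quadSum p t = p ^ k * (I * (Real.sqrt p : ℝ)) ^ n ∨
        quadSum p t = -(p ^ k * (I * (Real.sqrt p : ℝ)) ^ n)) := by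
  have hp : 1 < p := (Fact.out : p.Prime).one_lt
  have : Invertible (2 : ZMod p) :=
    invertibleOfNonzero (two_ne_zero_of_mod_four (p := p) (F := ZMod p) hp4)
  obtain ⟨w, ⟨e⟩⟩ := QuadraticForm.equivalent_weightedSumSquares (traceQuadForm p t)
  set Z : Finset (Fin (Module.finrank (ZMod p) F)) := {i | w i = 0} with hZ
  refine ⟨#Z, #Zᶜ, ?_, by simp, ?_⟩
  · let g : (Z → ZMod p) → F := fun a => e.symm (fun i => if h : i ∈ Z then a ⟨i, h⟩ else 0)
    have hg : Function.Injective g := by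
      intro a b hab
      have h1 := e.symm.injective hab
      ext ⟨i, hi⟩
      simpa [hi] using congrFun h1 i
    have hroot : ∀ a, (radicalPoly p t).IsRoot (g a) := by
      intro a
      apply radicalPoly_isRoot
      intro y
      have h1 : ∀ u, traceQuadForm p t u = QuadraticMap.weightedSumSquares (ZMod p) w (e u) :=
        fun u => (e.map_app u).symm
      rw [QuadraticMap.polar, h1, h1, h1, map_add]
      have h2 : e (g a) = fun i => if h : i ∈ Z then a ⟨i, h⟩ else 0 := e.apply_symm_apply _
      rw [h2]
      simp only [QuadraticMap.weightedSumSquares_apply, ← Finset.sum_sub_distrib]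
      refine Finset.sum_eq_zero fun i _ => ?_
      by_cases hi : i ∈ Z
      · have : w i = 0 := by simpa [hZ] using hi
        simp [this]
      · simp [hi]
    have hne := radicalPoly_ne_zero hp4 ht
    have hcard : p ^ #Z ≤ p ^ 4 := by
      classical
      calc p ^ #Z = Fintype.card (Z → ZMod p) := by simp [ZMod.card]
        _ = #(Finset.univ.image g) := by rw [Finset.card_image_of_injective _ hg, Finset.card_univ]
        _ ≤ #(radicalPoly p t).roots.toFinset := Finset.card_le_card fun x hx => by
          obtain ⟨a, -, rfl⟩ := Finset.mem_image.mp hx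
          rw [Multiset.mem_toFinset, Polynomial.mem_roots hne]
          exact hroot a
        _ ≤ Multiset.card (radicalPoly p t).roots := Multiset.toFinset_card_le _
        _ ≤ (radicalPoly p t).natDegree := Polynomial.card_roots' _
        _ ≤ p ^ 4 := radicalPoly_natDegree_le hp t
    exact (Nat.pow_le_pow_iff_right hp).mp hcard
  · have hS : quadSum p t = ∏ i, ∑ x : ZMod p, (ZMod.stdAddChar (w i * x ^ 2) : ℂ) := by
      rw [Finset.prod_univ_sum, Fintype.piFinset_univ, quadSum]
      refine Fintype.sum_equiv e.toEquiv _ _ fun x => ?_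
      rw [traceChar_apply, ← traceQuadForm_apply, ← e.map_app x,
        QuadraticMap.weightedSumSquares_apply]
      have hprod := map_prod (ZMod.stdAddChar (N := p)).toMonoidHom
        (fun i => Multiplicative.ofAdd (w i * (e x i) ^ 2)) Finset.univ
      simp only [smul_eq_mul, ← sq]
      exact hprod
    have h1 : ∏ i ∈ Z, ∑ x : ZMod p, (ZMod.stdAddChar (w i * x ^ 2) : ℂ) = p ^ #Z := by
      rw [Finset.prod_congr rfl (g := fun _ => (p : ℂ)), Finset.prod_const]
      intro i hi
      have : w i = 0 := by simpa [hZ] using hi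
      simp [this, ZMod.card]
    have h2 := prod_eq_pow_or_neg_pow Zᶜ
      (fun i => ∑ x : ZMod p, (ZMod.stdAddChar (w i * x ^ 2) : ℂ)) _
      (fun i hi => quadratic_sum_eq hp4 (by simpa [hZ] using hi))
    rw [hS, ← Finset.prod_mul_prod_compl Z, h1]
    rcases h2 with h2 | h2
    · left; rw [h2]
    · right; rw [h2, mul_neg]

section Values

variable {p m : ℕ}

lemma norm_nval {ε : ℤ} (hε : ε = 1 ∨ ε = -1) (j : ℕ) :
    ‖nval p m ε j‖ = Real.sqrt ((p : ℝ) ^ (m + j)) := by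
  unfold nval
  rcases hε with rfl | rfl <;> split_ifs <;> simp [abs_of_nonneg (Real.sqrt_nonneg _)]

lemma nval_even (ε : ℤ) (h i : ℕ) : nval p (2 * h) ε (2 * i) = ε * (p : ℂ) ^ (h + i) := by
  have : (p : ℝ) ^ (2 * h + 2 * i) = ((p : ℝ) ^ (h + i)) ^ 2 := by ring
  rw [nval, if_pos (by omega), this, Real.sqrt_sq (by positivity)]
  push_cast; rfl

lemma nval_odd_sq (ε : ℤ) (i : ℕ) :
    nval p m ε (2 * i + 1) ^ 2 = ((-(ε ^ 2 * (p : ℝ) ^ (m + (2 * i + 1))) : ℝ) : ℂ) := by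
  have h : Real.sqrt ((p : ℝ) ^ (m + (2 * i + 1))) ^ 2 = (p : ℝ) ^ (m + (2 * i + 1)) :=
    Real.sq_sqrt (by positivity)
  rw [nval, if_neg (by omega), mul_pow, mul_pow, I_sq, ← ofReal_pow, h]
  push_cast; ring

lemma nval_odd_re (ε : ℤ) (i : ℕ) : (nval p m ε (2 * i + 1)).re = 0 := by
  rw [nval, if_neg (by omega)]
  simp

lemma nval_odd_cube_re (ε : ℤ) (i : ℕ) : (nval p m ε (2 * i + 1) ^ 3).re = 0 := by
  rw [pow_succ, nval_odd_sq, re_ofReal_mul, nval_odd_re, mul_zero]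

lemma nval_injOn (hp : 1 < p) :
    Set.InjOn (fun s : ℤ × ℕ => nval p m s.1 s.2)
      (({1, -1} : Finset ℤ) ×ˢ Finset.range 5 : Finset (ℤ × ℕ)) := by
  rintro ⟨ε, j⟩ hs ⟨ε', j'⟩ hs' h
  simp only [Finset.coe_product, Set.mem_prod, Finset.mem_coe, Finset.mem_insert,
    Finset.mem_singleton] at hs hs'
  have h' : nval p m ε j = nval p m ε' j' := h
  have hj : j = j' := by
    have hn := congrArg norm h'
    rw [norm_nval hs.1, norm_nval hs'.1] at hn
    rw [Real.sqrt_inj (by positivity) (by positivity)] at hn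
    have := Nat.pow_right_injective hp (by exact_mod_cast hn : p ^ (m + j) = p ^ (m + j'))
    omega
  subst hj
  have h0 : (Real.sqrt ((p : ℝ) ^ (m + j)) : ℂ) ≠ 0 := by
    have : 0 < Real.sqrt ((p : ℝ) ^ (m + j)) := Real.sqrt_pos.mpr (by positivity)
    exact_mod_cast this.ne'
  have hε : (ε : ℂ) = ε' := by
    unfold nval at h'
    split_ifs at h'
    · exact mul_right_cancel₀ h0 h'
    · exact mul_right_cancel₀ I_ne_zero (mul_right_cancel₀ h0 h')
  rw [Int.cast_inj.mp hε]

end Values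

lemma pow_mul_I_sqrt_pow_eq_nval {p m k n : ℕ} (hm : Even m) (hkn : k + n = m) :
    (p : ℂ) ^ k * (I * (Real.sqrt p : ℝ)) ^ n = nval p m 1 k ∨
      (p : ℂ) ^ k * (I * (Real.sqrt p : ℝ)) ^ n = nval p m (-1) k := by
  have hsq : (Real.sqrt p) ^ 2 = (p : ℝ) := Real.sq_sqrt (Nat.cast_nonneg p)
  have hr : Real.sqrt ((p : ℝ) ^ (m + k)) = (p : ℝ) ^ k * Real.sqrt p ^ n := by
    rw [Real.sqrt_eq_iff_mul_self_eq (by positivity) (by positivity), ← hkn]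
    rw [show (p : ℝ) ^ k * Real.sqrt p ^ n * ((p : ℝ) ^ k * Real.sqrt p ^ n)
      = (p : ℝ) ^ (2 * k) * (Real.sqrt p ^ 2) ^ n by ring, hsq]
    ring
  have hrC : ((Real.sqrt ((p : ℝ) ^ (m + k)) : ℝ) : ℂ) = (p : ℂ) ^ k * (Real.sqrt p : ℂ) ^ n := by
    rw [hr]; push_cast; rfl
  unfold nval
  rw [hrC, mul_pow]
  obtain ⟨h, hh⟩ := hm
  rcases Nat.even_or_odd' n with ⟨c, hc | hc⟩
  · simp only [if_pos (show k % 2 = 0 by omega)]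
    have hI : I ^ n = (-1) ^ c := by rw [hc, pow_mul, I_sq]
    rw [hI]
    rcases neg_one_pow_eq_or ℂ c with h1 | h1 <;> rw [h1]
    · left; push_cast; ring
    · right; push_cast; ring
  · simp only [if_neg (show ¬k % 2 = 0 by omega)]
    have hI : I ^ n = (-1) ^ c * I := by rw [hc, pow_succ, pow_mul, I_sq]
    rw [hI]
    rcases neg_one_pow_eq_or ℂ c with h1 | h1 <;> rw [h1]
    · left; push_cast; ring
    · right; push_cast; ring

lemma neg_nval (p m : ℕ) (ε : ℤ) (j : ℕ) : -nval p m ε j = nval p m (-ε) j := by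
  unfold nval
  split_ifs <;> push_cast <;> ring

section Moments

variable {p m : ℕ} [Fact p.Prime] [Fintype (GaloisField p m)]

lemma expSum_eq_quadSum (t : GaloisField p m × GaloisField p m × GaloisField p m) :
    expSum p m t.1 t.2.1 t.2.2 = quadSum p t := by
  unfold expSum quadSum
  simp only [zetaPow_eq_stdAddChar, traceChar_apply]
  congr!

lemma quadSum_mem_nval (hp4 : p % 4 = 3) (hm : 0 < m) (hme : Even m)
    {t : GaloisField p m × GaloisField p m × GaloisField p m} (ht : t ≠ 0) :
    quadSum p t ∈ (({1, -1} : Finset ℤ) ×ˢ Finset.range 5).image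
      (fun s : ℤ × ℕ => nval p m s.1 s.2) := by
  obtain ⟨k, n, hk, hkn, h⟩ := quadSum_eq hp4 ht
  rw [GaloisField.finrank p hm.ne'] at hkn
  have hk5 : k < 5 := by omega
  have hv := pow_mul_I_sqrt_pow_eq_nval (p := p) hme hkn
  simp only [Finset.mem_image, Finset.mem_product, Finset.mem_insert, Finset.mem_singleton,
    Finset.mem_range, Prod.exists]
  rcases h with h | h <;> rcases hv with hv | hv <;> rw [h, hv]
  · exact ⟨1, k, by simp [hk5], rfl⟩
  · exact ⟨-1, k, by simp [hk5], rfl⟩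
  · exact ⟨-1, k, by simp [hk5], by rw [neg_nval]⟩
  · exact ⟨1, k, by simp [hk5], by rw [neg_nval, neg_neg]⟩

lemma nn_eq_card [DecidableEq (GaloisField p m)] (ε : ℤ) (j : ℕ) :
    nn p m ε j = #{t ∈ (Finset.univ : Finset (GaloisField p m × GaloisField p m ×
      GaloisField p m)).erase 0 | quadSum p t = nval p m ε j} := by
  rw [nn, ← Set.ncard_coe_finset]
  congr 1
  ext t
  simp [expSum_eq_quadSum, Prod.ext_iff]

open Classical in
/-- The value distribution computes the `k`-th moment of the exponential sums. -/
lemma sum_nn_mul_nval_pow (hp4 : p % 4 = 3) (hm : 0 < m) (hme : Even m) (k : ℕ) :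
    ∑ s ∈ ({1, -1} : Finset ℤ) ×ˢ Finset.range 5, (nn p m s.1 s.2 : ℂ) * nval p m s.1 s.2 ^ k
      = ((p : ℂ) ^ m) ^ 3 * #{v : Fin k → GaloisField p m | IsDiagZero p v} - ((p : ℂ) ^ m) ^ k := by
  have hcard : Fintype.card (GaloisField p m) = p ^ m := by
    rw [← Nat.card_eq_fintype_card, GaloisField.card p m hm.ne']
  have h0 : quadSum p (0 : GaloisField p m × GaloisField p m × GaloisField p m) = (p : ℂ) ^ m := by
    simp [quadSum, hcard]
  have h1 := sum_quadSum_pow (p := p) (F := GaloisField p m) k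
  rw [← Finset.add_sum_erase _ _ (Finset.mem_univ 0), h0, hcard] at h1
  push_cast at h1
  rw [← h1, add_sub_cancel_left, ← Finset.sum_fiberwise_of_maps_to (fun t ht =>
    quadSum_mem_nval hp4 hm hme (Finset.ne_of_mem_erase ht)),
    Finset.sum_image (nval_injOn (Fact.out : p.Prime).one_lt)]
  refine Finset.sum_congr rfl fun s _ => ?_
  rw [nn_eq_card, Finset.sum_congr rfl fun t ht => by rw [(Finset.mem_filter.mp ht).2],
    Finset.sum_const, nsmul_eq_mul]

end Moments

theorem first_three_moment_identities (p : ℕ) [Fact p.Prime] (hp4 : p % 4 = 3)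
    (m : ℕ) (hm : 0 < m) (hme : Even m) :
    ((nn p m 1 1 : ℤ) + nn p m (-1) 1) + ((nn p m 1 3 : ℤ) + nn p m (-1) 3) +
        (nn p m 1 0 : ℤ) + nn p m (-1) 0 + nn p m 1 2 + nn p m (-1) 2 +
        nn p m 1 4 + nn p m (-1) 4 = (p : ℤ) ^ (3 * m) - 1 ∧
    (nn p m 1 0 : ℤ) - nn p m (-1) 0 + (p : ℤ) * ((nn p m 1 2 : ℤ) - nn p m (-1) 2) +
        (p : ℤ) ^ 2 * ((nn p m 1 4 : ℤ) - nn p m (-1) 4) =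
        (p : ℤ) ^ (m / 2) * ((p : ℤ) ^ (2 * m) - 1) ∧
    -(p : ℤ) * ((nn p m 1 1 : ℤ) + nn p m (-1) 1) -
        (p : ℤ) ^ 3 * ((nn p m 1 3 : ℤ) + nn p m (-1) 3) +
        (nn p m 1 0 : ℤ) + nn p m (-1) 0 +
        (p : ℤ) ^ 2 * ((nn p m 1 2 : ℤ) + nn p m (-1) 2) +
        (p : ℤ) ^ 4 * ((nn p m 1 4 : ℤ) + nn p m (-1) 4) =
        (p : ℤ) ^ m * ((p : ℤ) ^ m - 1) ∧
    (nn p m 1 0 : ℤ) - nn p m (-1) 0 + (p : ℤ) ^ 3 * ((nn p m 1 2 : ℤ) - nn p m (-1) 2) +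
        (p : ℤ) ^ 6 * ((nn p m 1 4 : ℤ) - nn p m (-1) 4) =
        ((p : ℤ) + 1) * (p : ℤ) ^ (3 * m / 2) * ((p : ℤ) ^ m - 1) := by
  obtain ⟨h, rfl⟩ := hme.two_dvd
  let _ : Fintype (GaloisField p (2 * h)) := Fintype.ofFinite _
  classical
  have hp0 : (p : ℝ) ≠ 0 := Nat.cast_ne_zero.mpr (Fact.out : p.Prime).ne_zero
  have hcard : (Fintype.card (GaloisField p (2 * h)) : ℤ) = (p : ℤ) ^ (2 * h) := by
    rw [← Nat.card_eq_fintype_card, GaloisField.card p (2 * h) hm.ne']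
    push_cast; rfl
  have moment : ∀ k : ℕ,
      ((nn p (2 * h) 1 0 : ℝ) * (nval p (2 * h) 1 (2 * 0) ^ k).re
        + nn p (2 * h) 1 1 * (nval p (2 * h) 1 (2 * 0 + 1) ^ k).re
        + nn p (2 * h) 1 2 * (nval p (2 * h) 1 (2 * 1) ^ k).re
        + nn p (2 * h) 1 3 * (nval p (2 * h) 1 (2 * 1 + 1) ^ k).re
        + nn p (2 * h) 1 4 * (nval p (2 * h) 1 (2 * 2) ^ k).re)
      + (nn p (2 * h) (-1) 0 * (nval p (2 * h) (-1) (2 * 0) ^ k).re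
        + nn p (2 * h) (-1) 1 * (nval p (2 * h) (-1) (2 * 0 + 1) ^ k).re
        + nn p (2 * h) (-1) 2 * (nval p (2 * h) (-1) (2 * 1) ^ k).re
        + nn p (2 * h) (-1) 3 * (nval p (2 * h) (-1) (2 * 1 + 1) ^ k).re
        + nn p (2 * h) (-1) 4 * (nval p (2 * h) (-1) (2 * 2) ^ k).re)
      = ((p : ℝ) ^ (2 * h)) ^ 3 * #{v : Fin k → GaloisField p (2 * h) | IsDiagZero p v}
        - ((p : ℝ) ^ (2 * h)) ^ k := by
    intro k
    have hk := congrArg re (sum_nn_mul_nval_pow (p := p) hp4 hm hme k)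
    rw [Finset.sum_product, Finset.sum_pair (by norm_num)] at hk
    simp only [Finset.sum_range_succ, Finset.sum_range_zero, zero_add, add_re, sub_re,
      ← ofReal_natCast, ← ofReal_pow, ← ofReal_mul, re_ofReal_mul, ofReal_re] at hk
    exact hk
  have evenRe : ∀ (ε : ℤ) (i k : ℕ),
      (nval p (2 * h) ε (2 * i) ^ k).re = (ε : ℝ) ^ k * ((p : ℝ) ^ (h + i)) ^ k := by
    intro ε i k
    rw [nval_even, mul_pow, ← ofReal_natCast, ← ofReal_intCast, ← ofReal_pow, ← ofReal_pow,
      ← ofReal_pow, ← ofReal_mul, ofReal_re]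
  have E0 := moment 0
  have E1 := moment 1
  have E2 := moment 2
  have E3 := moment 3
  have c0 : #{v : Fin 0 → GaloisField p (2 * h) | IsDiagZero p v} = 1 := by
    simp [IsDiagZero]
  have c3 : (#{v : Fin 3 → GaloisField p (2 * h) | IsDiagZero p v} : ℝ)
      = 1 + (p + 1) * ((p : ℝ) ^ (2 * h) - 1) := by
    have := card_isDiagZero_three (p := p) (F := GaloisField p (2 * h)) hp4
    rw [hcard] at this
    exact_mod_cast this
  rw [c0] at E0
  rw [card_isDiagZero_one] at E1
  rw [card_isDiagZero_two hp4] at E2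
  rw [c3] at E3
  simp only [pow_zero, one_re, mul_one] at E0
  simp only [evenRe] at E1 E2 E3
  simp only [pow_one, nval_odd_re] at E1
  simp only [nval_odd_sq, ofReal_re] at E2
  simp only [nval_odd_cube_re] at E3
  have hP : (p : ℝ) ^ h ≠ 0 := pow_ne_zero _ hp0
  refine ⟨?_, ?_, ?_, ?_⟩
  · have : (p : ℝ) ^ (3 * (2 * h)) = ((p : ℝ) ^ (2 * h)) ^ 3 := by ring
    rify
    linear_combination E0 - this
  · rw [Nat.mul_div_cancel_left h two_pos]
    rify
    apply mul_left_cancel₀ hP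
    push_cast at E1
    ring_nf at E1 ⊢
    linear_combination E1
  · rify
    apply mul_left_cancel₀ (pow_ne_zero 2 hP)
    push_cast at E2
    ring_nf at E2 ⊢
    linear_combination E2
  · rw [show 3 * (2 * h) / 2 = 3 * h by omega]
    rify
    apply mul_left_cancel₀ (pow_ne_zero 3 hP)
    push_cast at E3
    ring_nf at E3 ⊢
    linear_combination E3
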